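/- Let A be a commutative ring and B an A-algebra which is finite and free as an A-module. Let C := B ⊗_A B, m : C → B the multiplication map, J := ker m, and 𝒟 := m(Ann_C(J)). If the trace map τ_{B/A} : B → Hom_A(B,A) is injective, then the different ideal equals 𝒟: δ_{B/A} = 𝒟. -/

import Mathlib

open scoped TensorProduct

section helpers
variable {A B : Type*} [CommRing A] [CommRing B] [Algebra A B]

theorem aux_trace_sum {ι : Type*} [Fintype ι] (e : Module.Basis ι A B) (y : B) :
    Algebra.trace A B y = ∑ i, e.coord i (y * e i) := by
  classical
  rw [Algebra.trace_eq_matrix_trace e, Matrix.trace]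
  simp [Algebra.leftMulMatrix_eq_repr_mul]

theorem aux_exists_disc {ι : Type*} [Fintype ι] (e : Module.Basis ι A B)
    (hinj : ∀ b : B, (∀ y : B, Algebra.trace A B (b * y) = 0) → b = 0) :
    ∃ d ∈ nonZeroDivisors A, ∀ f : B →ₗ[A] A, ∃ b : B, ∀ y : B,
      d * f y = Algebra.trace A B (b * y) := by
  classical
  let M : Matrix ι ι A := Matrix.of fun i j => Algebra.trace A B (e i * e j)
  have key : ∀ (v : ι → A) (i : ι),
      (M.mulVec v) i = Algebra.trace A B ((∑ j, v j • e j) * e i) := by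
    intro v i
    simp only [M, Matrix.mulVec, dotProduct, Matrix.of_apply, Finset.sum_mul, map_sum,
      smul_mul_assoc, map_smul, smul_eq_mul]
    refine Finset.sum_congr rfl fun j _ => ?_
    rw [mul_comm (e i), mul_comm]
  refine ⟨M.det, ?_, ?_⟩
  · rw [← Matrix.nonsingular_iff_det_mem_nonZeroDivisors]
    apply Matrix.Nonsingular.of_leftRegular
    rw [Matrix.isLeftRegular_iff_mulVec_injective]
    change Function.Injective M.mulVecLin
    rw [injective_iff_map_eq_zero]
    intro v hv
    have h0 : (∑ j, v j • e j) = 0 := by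
      apply hinj
      intro y
      have : (Algebra.trace A B) ∘ₗ LinearMap.mulLeft A (∑ j, v j • e j) = 0 := by
        apply e.ext
        intro i
        have := congrFun hv i
        rw [Matrix.mulVecLin_apply, key] at this
        simpa using this
      exact LinearMap.congr_fun this y
    funext i
    exact Fintype.linearIndependent_iff.1 e.linearIndependent v h0 i
  · intro f
    let v : ι → A := M.adjugate.mulVec fun i => f (e i)
    refine ⟨∑ j, v j • e j, fun y => ?_⟩
    have : M.det • f = (Algebra.trace A B) ∘ₗ LinearMap.mulLeft A (∑ j, v j • e j) := by
      apply e.ext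
      intro i
      rw [LinearMap.comp_apply, LinearMap.mulLeft_apply, ← key]
      simp [v, Matrix.mulVec_mulVec, Matrix.mul_adjugate, Matrix.smul_mulVec]
    exact LinearMap.congr_fun this y

/-- contraction of the first factor -/
noncomputable def auxPhi (f : B →ₗ[A] A) : B ⊗[A] B →ₗ[A] B :=
  TensorProduct.lift ((LinearMap.lsmul A B) ∘ₗ f)

theorem auxPhi_tmul (f : B →ₗ[A] A) (a b : B) : auxPhi f (a ⊗ₜ[A] b) = f a • b := by
  simp [auxPhi]

theorem auxPhi_left (f : B →ₗ[A] A) (b : B) (c : B ⊗[A] B) :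
    auxPhi f (c * (b ⊗ₜ 1)) = auxPhi (f ∘ₗ LinearMap.mulLeft A b) c := by
  induction c with
  | zero => simp
  | add x y hx hy => rw [add_mul, map_add, map_add, hx, hy]
  | tmul x y => simp [auxPhi_tmul, mul_comm]

theorem auxPhi_right (f : B →ₗ[A] A) (b : B) (c : B ⊗[A] B) :
    auxPhi f (c * (1 ⊗ₜ b)) = b * auxPhi f c := by
  induction c with
  | zero => simp
  | add x y hx hy => rw [add_mul, map_add, map_add, hx, hy, mul_add]
  | tmul x y => simp [auxPhi_tmul, mul_comm]

theorem auxPhi_smul (f : B →ₗ[A] A) (a : A) (c : B ⊗[A] B) :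
    auxPhi (a • f) c = a • auxPhi f c := by
  induction c with
  | zero => simp
  | add x y hx hy => rw [map_add, map_add, hx, hy, smul_add]
  | tmul x y => simp [auxPhi_tmul, mul_smul]

theorem auxPhi_trace {ι : Type*} [Fintype ι] (e : Module.Basis ι A B) (c : B ⊗[A] B) :
    auxPhi (Algebra.trace A B) c = ∑ i, auxPhi (e.coord i ∘ₗ LinearMap.mulLeft A (e i)) c := by
  induction c with
  | zero => simp
  | add x y hx hy => simp only [map_add, hx, hy, Finset.sum_add_distrib]
  | tmul x y =>
    simp only [auxPhi_tmul, aux_trace_sum e, Finset.sum_smul, LinearMap.comp_apply,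
      LinearMap.mulLeft_apply]
    exact Finset.sum_congr rfl fun i _ => by rw [mul_comm]

theorem auxPhi_lmul {ι : Type*} [Fintype ι] (e : Module.Basis ι A B) (c : B ⊗[A] B) :
    ∑ i, e i * auxPhi (e.coord i) c = Algebra.TensorProduct.lmul' A (S := B) c := by
  induction c with
  | zero => simp
  | add x y hx hy => simp only [map_add, mul_add, ← hx, ← hy, Finset.sum_add_distrib]
  | tmul x y =>
    simp only [auxPhi_tmul, Algebra.TensorProduct.lmul'_apply_tmul]
    conv_rhs => rw [← e.sum_repr x, Finset.sum_mul]
    exact Finset.sum_congr rfl fun i _ => by simp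

theorem aux_tr_congr (hinj : ∀ b : B, (∀ y : B, Algebra.trace A B (b * y) = 0) → b = 0)
    (u v : B) (h : ∀ y, Algebra.trace A B (u * y) = Algebra.trace A B (v * y)) : u = v := by
  rw [← sub_eq_zero]
  apply hinj
  intro y
  rw [sub_mul, map_sub, h, sub_self]

end helpers

/-- Let `A` be a commutative ring and `B` an `A`-algebra which is finite and
free as an `A`-module.  Let `C := B ⊗[A] B`, `m : C → B` the multiplication map, `J := ker m`
and `𝒟 := m(Ann_C J)`.  If the trace map `τ_{B/A} : B → Hom_A(B, A)` is injective, then the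
different ideal equals `𝒟`: an element `x : B` satisfies `x · f ∈ im τ_{B/A}` for all
`f : Hom_A(B, A)` if and only if `x = m c` for some `c` annihilating `J`. -/
theorem different_eq_D_of_injective_trace
    {A B : Type*} [CommRing A] [CommRing B] [Algebra A B]
    [Module.Finite A B] [Module.Free A B]
    (hinj : ∀ b : B, (∀ y : B, Algebra.trace A B (b * y) = 0) → b = 0) :
    ∀ x : B,
      (∀ f : B →ₗ[A] A, ∃ b : B, ∀ y : B, f (x * y) = Algebra.trace A B (b * y)) ↔
      (∃ c : B ⊗[A] B,
        (∀ j ∈ RingHom.ker (Algebra.TensorProduct.lmul' A : B ⊗[A] B →ₐ[A] B), c * j = 0) ∧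
        Algebra.TensorProduct.lmul' A (S := B) c = x) := by
  classical
  intro x
  let e := Module.Free.chooseBasis A B
  constructor
  · intro h
    choose φ hφ using h
    refine ⟨∑ i, e i ⊗ₜ φ (e.coord i), ?_, ?_⟩
    · intro j hj
      have hj' : j ∈ Ideal.span
          (Set.range fun s : B => (1 : B) ⊗ₜ[A] s - s ⊗ₜ[A] (1 : B)) := by
        rw [KaehlerDifferential.span_range_eq_ideal]
        exact hj
      clear hj
      induction hj' using Submodule.span_induction with
      | zero => simp
      | add u v _ _ hu hv => rw [mul_add, hu, hv, add_zero]
      | smul a u _ hu => rw [smul_eq_mul, mul_left_comm, hu, mul_zero]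
      | mem u hu =>
        obtain ⟨b, rfl⟩ := hu
        have h1 : ∀ i, φ (e.coord i) * b = ∑ j, e.coord i (b * e j) • φ (e.coord j) := by
          intro i
          apply aux_tr_congr hinj
          intro y
          rw [mul_assoc, ← hφ, Finset.sum_mul, map_sum]
          simp only [smul_mul_assoc, map_smul, ← hφ]
          have : x * (b * y) = ∑ j, e.coord j (x * y) • (b * e j) := by
            simp only [← mul_smul_comm, ← Finset.mul_sum, Module.Basis.coord_apply, e.sum_repr]
            ring
          rw [this, map_sum]
          refine Finset.sum_congr rfl fun j _ => ?_
          rw [map_smul, smul_eq_mul, smul_eq_mul, mul_comm]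
        have h2 : ∀ j, e j * b = ∑ i, e.coord i (b * e j) • e i := by
          intro j
          simp only [Module.Basis.coord_apply, e.sum_repr]
          ring
        simp only [mul_sub, Finset.sum_mul, Algebra.TensorProduct.tmul_mul_tmul, mul_one, h1, h2,
          TensorProduct.tmul_sum, TensorProduct.sum_tmul]
        rw [sub_eq_zero, Finset.sum_comm]
        refine Finset.sum_congr rfl fun j _ => Finset.sum_congr rfl fun i _ => ?_
        rw [TensorProduct.smul_tmul]
    · apply aux_tr_congr hinj
      intro y
      rw [aux_trace_sum e (x * y)]
      simp only [map_sum, Algebra.TensorProduct.lmul'_apply_tmul, Finset.sum_mul]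
      refine Finset.sum_congr rfl fun i _ => ?_
      rw [mul_comm (e i), mul_assoc, ← hφ]
      congr 1
      ring
  · rintro ⟨c, hc, rfl⟩ f
    have hlin : ∀ (f : B →ₗ[A] A) (b : B),
        auxPhi (f ∘ₗ LinearMap.mulLeft A b) c = b * auxPhi f c := by
      intro f b
      rw [← auxPhi_left, ← auxPhi_right, ← sub_eq_zero, ← map_sub, ← mul_sub, hc, map_zero]
      simp [RingHom.mem_ker]
    have htr : auxPhi (Algebra.trace A B) c = Algebra.TensorProduct.lmul' A (S := B) c := by
      rw [auxPhi_trace e, ← auxPhi_lmul e]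
      exact Finset.sum_congr rfl fun i _ => hlin _ _
    obtain ⟨d, hd, hdf⟩ := aux_exists_disc e hinj
    obtain ⟨b, hb⟩ := hdf f
    refine ⟨auxPhi f c, fun y => ?_⟩
    have hb' : d • f = Algebra.trace A B ∘ₗ LinearMap.mulLeft A b := by
      ext y
      simpa using hb y
    have h3 : d • auxPhi f c = b * Algebra.TensorProduct.lmul' A (S := B) c := by
      rw [← auxPhi_smul, hb', hlin, htr]
    have h4 : d * (f (Algebra.TensorProduct.lmul' A (S := B) c * y)
        - Algebra.trace A B (auxPhi f c * y)) = 0 := by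
      rw [mul_sub, hb, ← mul_assoc, ← h3, smul_mul_assoc, map_smul, smul_eq_mul, sub_self]
    rw [← sub_eq_zero]
    exact (mem_nonZeroDivisors_iff_right.1 hd) _ (by rw [mul_comm]; exact h4)
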